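/- Let m, n, r, s be natural numbers with m, n ≥ 1 satisfying the metacyclic conditions s^n ≡ 1 (mod m) and r·s ≡ r (mod m), and let ε, τ ∈ {0,1}. Let Ĝ be the presented group on three generators x, y, i with relators x^m·i^{−1}, y^n·x^{−r}·i^{−ε}, y^{−1}·x·y·x^{−s}·i^{−τ}, i², i^{−1}·x^{−1}·i·x, and i^{−1}·y^{−1}·i·y (i.e., the group P_{(i, i^ε, i^τ)} = ⟨x, y, i ∣ x^m = i, y^n = x^r i^ε, x^y = x^s i^τ, i² = 1, i central⟩). Then Nat.card Ĝ = 2·m·n (i.e., P_{(i,i^ε,i^τ)} is a double covering of M(m,n,r,s)) if and only if (s + m·τ)^n ≡ 1 (mod 2m) and (r + m·ε)·(s + m·τ) ≡ r + m·ε (mod 2m); and in that case Ĝ is isomorphic to the metacyclic group M(2m, n, r + m·ε, s + m·τ) = ⟨x, y ∣ x^{2m} = 1, y^n = x^{r+mε}, x^y = x^{s+mτ}⟩. -/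

import Mathlib

/-- Relators of the presentation `P_{(i, i^ε, i^τ)} = ⟨x, y, i ∣ x^m = i, y^n = x^r i^ε,
x^y = x^s i^τ, i² = 1, [i,x] = 1, [i,y] = 1⟩`, on generators `x = of 0`, `y = of 1`,
`i = of 2` of the free group on `Fin 3`. -/
def relsPiετ (m n r s ε τ : ℕ) : Set (FreeGroup (Fin 3)) :=
  { FreeGroup.of 0 ^ m * (FreeGroup.of 2)⁻¹,
    FreeGroup.of 1 ^ n * (FreeGroup.of 0 ^ r * FreeGroup.of 2 ^ ε)⁻¹,
    (FreeGroup.of 1)⁻¹ * FreeGroup.of 0 * FreeGroup.of 1 *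
      (FreeGroup.of 0 ^ s * FreeGroup.of 2 ^ τ)⁻¹,
    FreeGroup.of 2 ^ 2,
    (FreeGroup.of 2)⁻¹ * (FreeGroup.of 0)⁻¹ * FreeGroup.of 2 * FreeGroup.of 0,
    (FreeGroup.of 2)⁻¹ * (FreeGroup.of 1)⁻¹ * FreeGroup.of 2 * FreeGroup.of 1 }

/-- Relators of the metacyclic presentation `M(m,n,r,s) = ⟨x, y ∣ x^m = 1, y^n = x^r,
x^y = x^s⟩`, on generators `x = of 0`, `y = of 1` of the free group on `Fin 2`. -/
def metacyclicRels (m n r s : ℕ) : Set (FreeGroup (Fin 2)) :=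
  { FreeGroup.of 0 ^ m,
    FreeGroup.of 1 ^ n * (FreeGroup.of 0 ^ r)⁻¹,
    (FreeGroup.of 1)⁻¹ * FreeGroup.of 0 * FreeGroup.of 1 * (FreeGroup.of 0 ^ s)⁻¹ }

/-!
Substituting `i = x ^ m` turns the presentation `P_{(i, i^ε, i^τ)}` into the metacyclic one
`M(2m, n, r + mε, s + mτ)`, whatever the parameters are: from `x ^ (2m) = 1` and `x^y = x^S` one
gets `(x ^ m)^y = x ^ (m S)`, which is `x ^ m` for odd `S` and `1` for even `S`, and in the latter
case `x ^ m = 1`; so `x ^ m` is central anyway.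

What remains is Hölder's criterion that `M(m, n, r, s)` has order `m n` if and only if
`s ^ n ≡ 1` and `r s ≡ r` modulo `m`. Every element has the form `y ^ j * x ^ a` with `j < n` and
`a < orderOf x`. If the order is `m n`, then `x` has order `m`, and the congruences follow because
`y ^ n = x ^ r` commutes with `x` and `x ^ r = y ^ n` commutes with `y`. Conversely, the congruences
are what is needed for the expected left multiplication on normal forms to define an action, which
is transitive on `n m` points.
-/

variable {G : Type*} [Group G] {m n r s : ℕ}

/-- The pair `(x, y)` satisfies the defining relations `x ^ m = 1`, `y ^ n = x ^ r` and
`x^y = x ^ s` of `M(m, n, r, s)`, in any group and without requiring `x` and `y` to generate. -/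
structure IsMetacyclicPair (m n r s : ℕ) (x y : G) : Prop where
  pow_left : x ^ m = 1
  pow_right : y ^ n = x ^ r
  conj : y⁻¹ * x * y = x ^ s

namespace IsMetacyclicPair

variable {x y : G}

theorem semiconjBy (h : IsMetacyclicPair m n r s x y) : SemiconjBy y (x ^ s) x := by
  rw [SemiconjBy, ← h.conj]
  group

theorem semiconjBy_pow (h : IsMetacyclicPair m n r s x y) (j : ℕ) :
    SemiconjBy (y ^ j) (x ^ s ^ j) x := by
  induction j with
  | zero => simp
  | succ j ih =>
    have hstep : SemiconjBy y (x ^ s ^ (j + 1)) (x ^ s ^ j) := by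
      simpa only [← pow_mul, ← pow_succ'] using h.semiconjBy.pow_right (s ^ j)
    rw [pow_succ y]
    exact ih.mul_left hstep

theorem pow_modEq_one (h : IsMetacyclicPair m n r s x y) : s ^ n ≡ 1 [MOD orderOf x] := by
  have hcomm : Commute (y ^ n) x := h.pow_right ▸ Commute.pow_self x r
  have hpow : x ^ s ^ n = x := mul_left_cancel ((h.semiconjBy_pow n).eq.trans hcomm.eq.symm)
  rwa [← pow_eq_pow_iff_modEq, pow_one]

theorem mul_modEq (h : IsMetacyclicPair m n r s x y) : r * s ≡ r [MOD orderOf x] := by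
  have hcomm : Commute y (x ^ r) := h.pow_right ▸ Commute.self_pow y n
  have hpow : (x ^ s) ^ r = x ^ r :=
    mul_left_cancel ((h.semiconjBy.pow_right r).eq.trans hcomm.eq.symm)
  rwa [← pow_eq_pow_iff_modEq, mul_comm, pow_mul]

theorem commute_pow_half (h : IsMetacyclicPair (2 * m) n r s x y) : Commute y (x ^ m) := by
  have hsemi : SemiconjBy y (x ^ (m * s)) (x ^ m) := by
    simpa only [← pow_mul, mul_comm] using h.semiconjBy.pow_right m
  obtain ⟨k, rfl | rfl⟩ := s.even_or_odd'
  · have hone : x ^ (m * (2 * k)) = 1 := by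
      rw [mul_left_comm, ← mul_assoc, pow_mul, h.pow_left, one_pow]
    rw [hone, SemiconjBy, mul_one, right_eq_mul] at hsemi
    rw [hsemi]
    exact Commute.one_right y
  · have hself : x ^ (m * (2 * k + 1)) = x ^ m := by
      rw [mul_add_one, mul_left_comm, ← mul_assoc, pow_add, pow_mul, h.pow_left, one_pow, one_mul]
    rwa [hself] at hsemi

theorem exists_eq_pow_mul_pow (h : IsMetacyclicPair m n r s x y) (hm : 0 < m) (hn : 0 < n)
    (hgen : Subgroup.closure {x, y} = ⊤) (g : G) : ∃ j a : ℕ, g = y ^ j * x ^ a := by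
  have hx : IsOfFinOrder x := isOfFinOrder_iff_pow_eq_one.2 ⟨m, hm, h.pow_left⟩
  have hy : IsOfFinOrder y :=
    IsOfFinOrder.of_pow (n := n) (h.pow_right ▸ hx.pow) hn.ne'
  have hclosure : Submonoid.closure {x, y} = ⊤ := by
    rw [← Subgroup.closure_toSubmonoid_of_isOfFinOrder (by simp [hx, hy]), hgen,
      Subgroup.top_toSubmonoid]
  induction g using Submonoid.induction_of_closure_eq_top_left hclosure with
  | one => exact ⟨0, 0, by simp⟩
  | mul_left u hu v ih =>
    obtain ⟨j, a, rfl⟩ := ih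
    rcases hu with rfl | rfl
    · exact ⟨j, s ^ j + a, by rw [pow_add, ← mul_assoc, ← mul_assoc, (h.semiconjBy_pow j).eq]⟩
    · exact ⟨j + 1, a, by rw [pow_succ', mul_assoc]⟩

theorem surjective_pow_mul_pow (h : IsMetacyclicPair m n r s x y) (hm : 0 < m) (hn : 0 < n)
    (hgen : Subgroup.closure {x, y} = ⊤) :
    Function.Surjective fun p : Fin n × Fin (orderOf x) => y ^ (p.1 : ℕ) * x ^ (p.2 : ℕ) := by
  intro g
  obtain ⟨j, a, rfl⟩ := h.exists_eq_pow_mul_pow hm hn hgen g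
  have hx : 0 < orderOf x := orderOf_pos_iff.2 (isOfFinOrder_iff_pow_eq_one.2 ⟨m, hm, h.pow_left⟩)
  refine ⟨(⟨j % n, Nat.mod_lt j hn⟩, ⟨(r * (j / n) + a) % orderOf x, Nat.mod_lt _ hx⟩), ?_⟩
  calc y ^ (j % n) * x ^ ((r * (j / n) + a) % orderOf x)
      = y ^ (j % n) * (y ^ n) ^ (j / n) * x ^ a := by
        rw [pow_mod_orderOf, pow_add, pow_mul, ← h.pow_right, mul_assoc]
    _ = y ^ j * x ^ a := by rw [← pow_mul, ← pow_add, Nat.mod_add_div]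

theorem finite (h : IsMetacyclicPair m n r s x y) (hm : 0 < m) (hn : 0 < n)
    (hgen : Subgroup.closure {x, y} = ⊤) : Finite G :=
  Finite.of_surjective _ (h.surjective_pow_mul_pow hm hn hgen)

theorem card_le_orderOf_mul (h : IsMetacyclicPair m n r s x y) (hm : 0 < m) (hn : 0 < n)
    (hgen : Subgroup.closure {x, y} = ⊤) : Nat.card G ≤ orderOf x * n := by
  simpa [mul_comm] using Nat.card_le_card_of_surjective _ (h.surjective_pow_mul_pow hm hn hgen)

theorem orderOf_le (h : IsMetacyclicPair m n r s x y) (hm : 0 < m) : orderOf x ≤ m :=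
  orderOf_le_of_pow_eq_one hm h.pow_left

theorem card_le (h : IsMetacyclicPair m n r s x y) (hm : 0 < m) (hn : 0 < n)
    (hgen : Subgroup.closure {x, y} = ⊤) : Nat.card G ≤ m * n :=
  (h.card_le_orderOf_mul hm hn hgen).trans (Nat.mul_le_mul_right n (h.orderOf_le hm))

theorem modEq_of_card_eq (h : IsMetacyclicPair m n r s x y) (hm : 0 < m) (hn : 0 < n)
    (hgen : Subgroup.closure {x, y} = ⊤) (hcard : Nat.card G = m * n) :
    s ^ n ≡ 1 [MOD m] ∧ r * s ≡ r [MOD m] := by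
  have horder : orderOf x = m := (h.orderOf_le hm).antisymm <|
    Nat.le_of_mul_le_mul_right (hcard ▸ h.card_le_orderOf_mul hm hn hgen) hn
  exact ⟨horder ▸ h.pow_modEq_one, horder ▸ h.mul_modEq⟩

end IsMetacyclicPair

theorem forall_mem_metacyclicRels_iff (f : FreeGroup (Fin 2) →* G) :
    (∀ w ∈ metacyclicRels m n r s, f w = 1) ↔
      IsMetacyclicPair m n r s (f (.of 0)) (f (.of 1)) := by
  simp only [metacyclicRels, Set.mem_insert_iff, Set.mem_singleton_iff, forall_eq_or_imp,
    forall_eq, map_mul, map_inv, map_pow, mul_inv_eq_one]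
  exact ⟨fun ⟨hx, hy, hxy⟩ => ⟨hx, hy, hxy⟩, fun ⟨hx, hy, hxy⟩ => ⟨hx, hy, hxy⟩⟩

theorem forall_mem_relsPiετ_iff {ε τ : ℕ} (f : FreeGroup (Fin 3) →* G) :
    (∀ w ∈ relsPiετ m n r s ε τ, f w = 1) ↔
      IsMetacyclicPair (2 * m) n (r + m * ε) (s + m * τ) (f (.of 0)) (f (.of 1)) ∧
        f (.of 2) = f (.of 0) ^ m := by
  simp only [relsPiετ, Set.mem_insert_iff, Set.mem_singleton_iff, forall_eq_or_imp, forall_eq,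
    map_mul, map_inv, map_pow, mul_inv_eq_one]
  generalize f (.of 0) = x, f (.of 1) = y, f (.of 2) = i
  constructor
  · rintro ⟨rfl, hy, hxy, hi, -, -⟩
    refine ⟨⟨?_, ?_, ?_⟩, rfl⟩
    · rw [mul_comm, pow_mul, hi]
    · rw [hy, pow_add, pow_mul]
    · rw [hxy, pow_add, pow_mul]
  · rintro ⟨h, rfl⟩
    refine ⟨rfl, ?_, ?_, ?_, ?_, ?_⟩
    · rw [h.pow_right, pow_add, pow_mul]
    · rw [h.conj, pow_add, pow_mul]
    · rw [← pow_mul, mul_comm, h.pow_left]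
    · group
    · rw [mul_assoc, ← h.commute_pow_half.eq]
      group

section Presentation

open PresentedGroup

theorem isMetacyclicPair_metacyclicRels (m n r s : ℕ) :
    IsMetacyclicPair m n r s (of 0 : PresentedGroup (metacyclicRels m n r s)) (of 1) :=
  (forall_mem_metacyclicRels_iff (mk _)).1 fun _ => one_of_mem

theorem closure_of_metacyclicRels (m n r s : ℕ) :
    Subgroup.closure {(of 0 : PresentedGroup (metacyclicRels m n r s)), of 1} = ⊤ := by
  refine (Subgroup.eq_top_iff' _).2 (generated_by _ _ fun i => Subgroup.subset_closure ?_)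
  fin_cases i <;> simp

theorem isMetacyclicPair_relsPiετ (m n r s ε τ : ℕ) :
    IsMetacyclicPair (2 * m) n (r + m * ε) (s + m * τ)
      (of 0 : PresentedGroup (relsPiετ m n r s ε τ)) (of 1) :=
  ((forall_mem_relsPiετ_iff (mk _)).1 fun _ => one_of_mem).1

theorem of_two_relsPiετ (m n r s ε τ : ℕ) :
    (of 2 : PresentedGroup (relsPiετ m n r s ε τ)) = of 0 ^ m :=
  ((forall_mem_relsPiετ_iff (mk _)).1 fun _ => one_of_mem).2

/-- The homomorphism from `M(m, n, r, s)` sending the generators to a given metacyclic pair. -/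
def IsMetacyclicPair.toHom {x y : G} (h : IsMetacyclicPair m n r s x y) :
    PresentedGroup (metacyclicRels m n r s) →* G :=
  toGroup (f := ![x, y]) ((forall_mem_metacyclicRels_iff _).2 (by simpa using h))

@[simp]
theorem IsMetacyclicPair.toHom_of_zero {x y : G} (h : IsMetacyclicPair m n r s x y) :
    h.toHom (of 0) = x := by
  simp [toHom]

@[simp]
theorem IsMetacyclicPair.toHom_of_one {x y : G} (h : IsMetacyclicPair m n r s x y) :
    h.toHom (of 1) = y := by
  simp [toHom]

/-- The isomorphism between `P_{(i, i^ε, i^τ)}` and `M(2m, n, r + mε, s + mτ)` that sends `x` to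
`x`, `y` to `y` and `i` to `x ^ m`. -/
def relsPiετMulEquiv (m n r s ε τ : ℕ) :
    PresentedGroup (relsPiετ m n r s ε τ) ≃*
      PresentedGroup (metacyclicRels (2 * m) n (r + m * ε) (s + m * τ)) :=
  MonoidHom.toMulEquiv
    (toGroup (f := ![of 0, of 1, of 0 ^ m]) ((forall_mem_relsPiετ_iff _).2
      (by simpa using isMetacyclicPair_metacyclicRels (2 * m) n (r + m * ε) (s + m * τ))))
    (isMetacyclicPair_relsPiετ m n r s ε τ).toHom
    (by
      ext i
      fin_cases i <;> simp [of_two_relsPiετ])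
    (by
      ext i
      fin_cases i <;> simp)

end Presentation

/-- Left multiplication by `x` on the normal forms `y ^ j * x ^ a` of `M(m, n + 1, r, s)`, encoded
as pairs `(j, a)`: since `x * y ^ j = y ^ j * x ^ (s ^ j)`, it adds `s ^ j` to `a`. -/
def normalFormX (m n s : ℕ) : Equiv.Perm (Fin (n + 1) × ZMod m) :=
  Equiv.prodShear (Equiv.refl _) fun j => Equiv.addRight ((s : ZMod m) ^ (j : ℕ))

/-- Left multiplication by `y` on the normal forms `y ^ j * x ^ a` of `M(m, n + 1, r, s)`, encoded
as pairs `(j, a)`: it increments `j`, and `y ^ (n + 1)` is absorbed as `x ^ r`. -/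
def normalFormY (m n r : ℕ) : Equiv.Perm (Fin (n + 1) × ZMod m) :=
  Equiv.prodShear (finRotate (n + 1)) fun j =>
    Equiv.addRight (if j = Fin.last n then (r : ZMod m) else 0)

theorem normalFormX_apply (j : Fin (n + 1)) (a : ZMod m) :
    normalFormX m n s (j, a) = (j, a + (s : ZMod m) ^ (j : ℕ)) :=
  rfl

theorem normalFormX_pow_apply (k : ℕ) (j : Fin (n + 1)) (a : ZMod m) :
    (normalFormX m n s ^ k) (j, a) = (j, a + k * (s : ZMod m) ^ (j : ℕ)) := by
  induction k with
  | zero => simp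
  | succ k ih =>
    rw [pow_succ', Equiv.Perm.mul_apply, ih, normalFormX_apply, Nat.cast_succ, add_one_mul,
      add_assoc]

theorem normalFormY_apply_castSucc (j : Fin n) (a : ZMod m) :
    normalFormY m n r (j.castSucc, a) = (j.succ, a) := by
  simp [normalFormY, (Fin.castSucc_lt_last j).ne]

theorem normalFormY_apply_last (a : ZMod m) :
    normalFormY m n r (Fin.last n, a) = (0, a + r) := by
  simp [normalFormY]

theorem normalFormY_pow_apply_zero (j : Fin (n + 1)) (a : ZMod m) :
    (normalFormY m n r ^ (j : ℕ)) (0, a) = (j, a) := by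
  induction j using Fin.induction with
  | zero => rfl
  | succ j ih =>
    rw [Fin.val_castSucc] at ih
    rw [Fin.val_succ, pow_succ', Equiv.Perm.mul_apply, ih, normalFormY_apply_castSucc]

theorem normalFormY_pow_succ_apply (j : Fin (n + 1)) (a : ZMod m) :
    (normalFormY m n r ^ (n + 1)) (j, a) = (j, a + r) := by
  have hlast : (normalFormY m n r ^ n) (0, a) = (Fin.last n, a) :=
    normalFormY_pow_apply_zero (Fin.last n) a
  have hzero : (normalFormY m n r ^ (n + 1)) (0, a) = (0, a + r) := by
    rw [pow_succ', Equiv.Perm.mul_apply, hlast, normalFormY_apply_last]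
  rw [← normalFormY_pow_apply_zero (r := r) j a, ← Equiv.Perm.mul_apply, pow_mul_comm,
    Equiv.Perm.mul_apply, hzero, normalFormY_pow_apply_zero]

theorem normalFormX_mul_normalFormY (hs : (s : ZMod m) ^ (n + 1) = 1) :
    normalFormX m n s * normalFormY m n r = normalFormY m n r * normalFormX m n s ^ s := by
  ext1 ⟨j, a⟩
  rw [Equiv.Perm.mul_apply, Equiv.Perm.mul_apply, normalFormX_pow_apply, ← pow_succ']
  cases j using Fin.lastCases with
  | last =>
    rw [normalFormY_apply_last, normalFormY_apply_last, normalFormX_apply, Fin.val_last, hs,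
      Fin.val_zero, pow_zero, add_right_comm]
  | cast j =>
    rw [normalFormY_apply_castSucc, normalFormY_apply_castSucc, normalFormX_apply, Fin.val_succ,
      Fin.val_castSucc]

theorem isMetacyclicPair_normalForm (hs : (s : ZMod m) ^ (n + 1) = 1)
    (hr : (r * s : ZMod m) = r) :
    IsMetacyclicPair m (n + 1) r s (normalFormX m n s) (normalFormY m n r) where
  pow_left := by
    ext1 ⟨j, a⟩
    simp [normalFormX_pow_apply]
  pow_right := by
    have hrpow (j : ℕ) : (r * s ^ j : ZMod m) = r := by
      induction j with
      | zero => simp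
      | succ j ih => rw [pow_succ', ← mul_assoc, hr, ih]
    ext1 ⟨j, a⟩
    rw [normalFormY_pow_succ_apply, normalFormX_pow_apply, hrpow]
  conj := by
    rw [mul_assoc, inv_mul_eq_iff_eq_mul, normalFormX_mul_normalFormY hs]

theorem normalFormY_pow_mul_normalFormX_pow_apply_zero [NeZero m] (j : Fin (n + 1)) (a : ZMod m) :
    (normalFormY m n r ^ (j : ℕ) * normalFormX m n s ^ a.val) (0, 0) = (j, a) := by
  simp [normalFormX_pow_apply, normalFormY_pow_apply_zero]

theorem card_metacyclicRels_eq_of_modEq (hm : 0 < m) (hn : 0 < n) (hs : s ^ n ≡ 1 [MOD m])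
    (hr : r * s ≡ r [MOD m]) :
    Nat.card (PresentedGroup (metacyclicRels m n r s)) = m * n := by
  have hpair := isMetacyclicPair_metacyclicRels m n r s
  have hgen := closure_of_metacyclicRels m n r s
  have : Finite (PresentedGroup (metacyclicRels m n r s)) := hpair.finite hm hn hgen
  refine (hpair.card_le hm hn hgen).antisymm ?_
  have : NeZero m := ⟨hm.ne'⟩
  obtain ⟨n, rfl⟩ := Nat.exists_eq_add_of_le' hn
  have hmodel : IsMetacyclicPair m (n + 1) r s (normalFormX m n s) (normalFormY m n r) :=
    isMetacyclicPair_normalForm (by simpa using (ZMod.natCast_eq_natCast_iff _ _ _).2 hs)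
      (by simpa using (ZMod.natCast_eq_natCast_iff _ _ _).2 hr)
  have horbit : Function.Surjective fun g => hmodel.toHom g (0, 0) := by
    rintro ⟨j, a⟩
    refine ⟨.of 1 ^ (j : ℕ) * .of 0 ^ a.val, ?_⟩
    simpa using normalFormY_pow_mul_normalFormX_pow_apply_zero j a
  simpa [mul_comm] using Nat.card_le_card_of_surjective _ horbit

theorem card_metacyclicRels_eq_iff (hm : 0 < m) (hn : 0 < n) :
    Nat.card (PresentedGroup (metacyclicRels m n r s)) = m * n ↔
      s ^ n ≡ 1 [MOD m] ∧ r * s ≡ r [MOD m] :=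
  ⟨(isMetacyclicPair_metacyclicRels m n r s).modEq_of_card_eq hm hn
      (closure_of_metacyclicRels m n r s),
    fun ⟨hs, hr⟩ => card_metacyclicRels_eq_of_modEq hm hn hs hr⟩

theorem stmt_16_general (m n r s ε τ : ℕ) (hm : 1 ≤ m) (hn : 1 ≤ n) :
    (Nat.card (PresentedGroup (relsPiετ m n r s ε τ)) = 2 * m * n ↔
      ((s + m * τ) ^ n ≡ 1 [MOD 2 * m] ∧
        (r + m * ε) * (s + m * τ) ≡ r + m * ε [MOD 2 * m])) ∧
    Nonempty (PresentedGroup (relsPiετ m n r s ε τ) ≃*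
      PresentedGroup (metacyclicRels (2 * m) n (r + m * ε) (s + m * τ))) := by
  have e := relsPiετMulEquiv m n r s ε τ
  rw [Nat.card_congr e.toEquiv]
  exact ⟨card_metacyclicRels_eq_iff (Nat.mul_pos two_pos hm) hn, ⟨e⟩⟩

/-- Theorem `Pixx`: for `m, n ≥ 1` satisfying the metacyclic conditions and
`ε, τ ∈ {0,1}`, the presented group `P_{(i,i^ε,i^τ)}` is a double covering of `M(m,n,r,s)`
(i.e. has order `2mn`) iff `(s+mτ)^n ≡ 1 (mod 2m)` and `(r+mε)(s+mτ) ≡ r+mε (mod 2m)`;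
and in that case it is isomorphic to the metacyclic group `M(2m, n, r+mε, s+mτ)`. -/
theorem stmt_16 (m n r s ε τ : ℕ) (hm : 1 ≤ m) (hn : 1 ≤ n)
    (hmc1 : s ^ n ≡ 1 [MOD m]) (hmc2 : r * s ≡ r [MOD m])
    (hε : ε = 0 ∨ ε = 1) (hτ : τ = 0 ∨ τ = 1) :
    (Nat.card (PresentedGroup (relsPiετ m n r s ε τ)) = 2 * m * n ↔
      ((s + m * τ) ^ n ≡ 1 [MOD 2 * m] ∧
        (r + m * ε) * (s + m * τ) ≡ r + m * ε [MOD 2 * m])) ∧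
    (((s + m * τ) ^ n ≡ 1 [MOD 2 * m] ∧
        (r + m * ε) * (s + m * τ) ≡ r + m * ε [MOD 2 * m]) →
      Nonempty (PresentedGroup (relsPiετ m n r s ε τ) ≃*
        PresentedGroup (metacyclicRels (2 * m) n (r + m * ε) (s + m * τ)))) := by
  obtain ⟨hcard, hiso⟩ := stmt_16_general m n r s ε τ hm hn
  exact ⟨hcard, fun _ => hiso⟩
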